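/- Let A be a finite-dimensional left Leibniz algebra over a field F of characteristic zero, let B be a subalgebra of A, and let B̲ be the subalgebra of B generated by all subinvariant subalgebras of A contained in B. Then B̲ is an ideal of B. -/

import Mathlib

open Submodule

section LeibnizDefs

variable {F : Type*} {A : Type*} [Field F] [AddCommGroup A] [Module F A]

/-- The span of all products `b*c` with `b ∈ B`, `c ∈ C`. -/
def mulSub (mul : A →ₗ[F] A →ₗ[F] A) (B C : Submodule F A) : Submodule F A :=
  Submodule.span F {z : A | ∃ b ∈ B, ∃ c ∈ C, mul b c = z}

/-- `fSub mul B C = B·C + C·B`, the function `f(B,C)`. -/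
def fSub (mul : A →ₗ[F] A →ₗ[F] A) (B C : Submodule F A) : Submodule F A :=
  mulSub mul B C ⊔ mulSub mul C B

/-- `fIter mul B C n = f^{n+1}(B,C)` (so index `0` is `f^1(B,C) = f(B,C)`). -/
def fIter (mul : A →ₗ[F] A →ₗ[F] A) (B C : Submodule F A) : ℕ → Submodule F A
  | 0 => fSub mul B C
  | n + 1 => fSub mul B (fIter mul B C n)

/-- `lcs mul B n = B^{n+1}`, the lower central series (index `0` is `B^1 = B`). -/
def lcs (mul : A →ₗ[F] A →ₗ[F] A) (B : Submodule F A) : ℕ → Submodule F A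
  | 0 => B
  | n + 1 => mulSub mul B (lcs mul B n)

/-- `ds mul B n = B^{(n+1)}`, the derived series (index `0` is `B^{(1)} = B`). -/
def ds (mul : A →ₗ[F] A →ₗ[F] A) (B : Submodule F A) : ℕ → Submodule F A
  | 0 => B
  | n + 1 => mulSub mul (ds mul B n) (ds mul B n)

/-- `B^ω = ⋂_{i ≥ 1} B^i`. -/
def omegaSub (mul : A →ₗ[F] A →ₗ[F] A) (B : Submodule F A) : Submodule F A :=
  ⨅ n, lcs mul B n

/-- `B` is a subalgebra: a subspace closed under multiplication. -/
def IsSubalg (mul : A →ₗ[F] A →ₗ[F] A) (B : Submodule F A) : Prop :=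
  ∀ x ∈ B, ∀ y ∈ B, mul x y ∈ B

/-- `I` is an ideal of the subalgebra `S`: `I ⊆ S` and `xI + Ix ⊆ I` for all `x ∈ S`. -/
def IsIdealIn (mul : A →ₗ[F] A →ₗ[F] A) (I S : Submodule F A) : Prop :=
  I ≤ S ∧ ∀ x ∈ S, ∀ y ∈ I, mul x y ∈ I ∧ mul y x ∈ I

/-- `B` is subinvariant in `S`: there is a chain of subalgebras
`B = c 0 ⊆ c 1 ⊆ ⋯ ⊆ c t = S` with each term an ideal of the next. -/
def IsSubinvariantIn (mul : A →ₗ[F] A →ₗ[F] A) (B S : Submodule F A) : Prop :=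
  ∃ (t : ℕ) (c : ℕ → Submodule F A), c 0 = B ∧ c t = S ∧
    (∀ i ≤ t, IsSubalg mul (c i)) ∧ ∀ i < t, IsIdealIn mul (c i) (c (i + 1))

/-- `B` is nilpotent: `B^m = 0` for some `m`. -/
def IsNilpotentSub (mul : A →ₗ[F] A →ₗ[F] A) (B : Submodule F A) : Prop :=
  ∃ m, lcs mul B m = ⊥

/-- `B` is solvable: `B^{(m)} = 0` for some `m`. -/
def IsSolvableSub (mul : A →ₗ[F] A →ₗ[F] A) (B : Submodule F A) : Prop :=
  ∃ m, ds mul B m = ⊥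

/-- The centralizer `Z_A(B) = {x : xb = 0 = bx for all b ∈ B}`. -/
def centralizerSet (mul : A →ₗ[F] A →ₗ[F] A) (B : Submodule F A) : Set A :=
  {x : A | ∀ b ∈ B, mul x b = 0 ∧ mul b x = 0}

/-- `R` is the radical (the maximal solvable ideal) of the subalgebra `S`. -/
def IsRadicalIn (mul : A →ₗ[F] A →ₗ[F] A) (S R : Submodule F A) : Prop :=
  IsIdealIn mul R S ∧ IsSolvableSub mul R ∧
    ∀ T, IsIdealIn mul T S → IsSolvableSub mul T → T ≤ R

/-- `N` is the nilradical (the maximal nilpotent ideal) of the subalgebra `S`. -/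
def IsNilradicalIn (mul : A →ₗ[F] A →ₗ[F] A) (S N : Submodule F A) : Prop :=
  IsIdealIn mul N S ∧ IsNilpotentSub mul N ∧
    ∀ T, IsIdealIn mul T S → IsNilpotentSub mul T → T ≤ N

/-- `H` is a Cartan subalgebra: a nilpotent self-normalizing subalgebra. -/
def IsCartan (mul : A →ₗ[F] A →ₗ[F] A) (H : Submodule F A) : Prop :=
  IsSubalg mul H ∧ IsNilpotentSub mul H ∧
    ∀ x : A, (∀ h ∈ H, mul x h ∈ H ∧ mul h x ∈ H) → x ∈ H

/-- The subalgebra generated by a set: the smallest subalgebra containing it. -/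
def subalgGen (mul : A →ₗ[F] A →ₗ[F] A) (s : Set A) : Submodule F A :=
  sInf {S : Submodule F A | IsSubalg mul S ∧ s ⊆ (S : Set A)}

end LeibnizDefs

/-!
If `S` is subinvariant in `A`, iterating `C ↦ S * C + C * S` from `C = A` ends inside `S`. With the
Leibniz identity this makes `S ^ ω` an ideal of `A` and lets `S` act nilpotently, by left
multiplication, on `V = A ⧸ S ^ ω`.

In characteristic zero the radical `T` of the trace form on an associative algebra of endomorphisms
of `V` is a nilpotent ideal. Hence passing from the algebra generated by the action of an ideal to
the one generated by the action of a larger algebra enlarges the radical, so along the chain from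
`S` to `A` the action of `S` stays inside the radical `T` belonging to `A`. The elements of `A`
acting through `T` form an ideal `N ⊇ S` of `A`, and nilpotency of `T` gives
`N ^ k ≤ S ^ ω ≤ S` for some `k`.

Every subalgebra of `N` containing `N ^ k` is subinvariant. If `S ≤ B`, this applies to `N ⊓ B`,
which contains `b * s` and `s * b` for all `s ∈ S` and `b ∈ B`. So the products of `B` with the
generators lie in the generated subalgebra, and the Leibniz identity extends this to all its
elements.
-/

section TracePowers

open Polynomial

-- The Fitting idempotent of `a`: with minimal polynomial `X ^ m * q`, `X ∤ q`, a Bézout identity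
-- `u * X ^ (m + 1) + v * q = 1` yields `p = u * X ^ m`.
theorem exists_isIdempotentElem_aeval_mul {F R : Type*} [Field F] [Ring R]
    [Algebra F R] {a : R} (ha : IsIntegral F a) :
    ∃ (p : F[X]) (n : ℕ), IsIdempotentElem (aeval a p * a) ∧ a ^ n * (aeval a p * a) = a ^ n := by
  obtain ⟨q, hq, hXq⟩ :=
    exists_eq_pow_rootMultiplicity_mul_and_not_dvd (minpoly F a) (minpoly.ne_zero ha) 0
  set m := (minpoly F a).rootMultiplicity 0
  rw [C_0, sub_zero] at hq hXq
  obtain ⟨u, v, huv⟩ : IsCoprime (X ^ (m + 1)) q :=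
    ((irreducible_X.coprime_iff_not_dvd).2 hXq).pow_left
  have aeval_eq_of_dvd : ∀ r s : F[X], X ^ m * q ∣ r - s → aeval a r = aeval a s := by
    rintro r s ⟨w, hw⟩
    rw [← sub_eq_zero, ← map_sub, hw, ← hq, map_mul, minpoly.aeval, zero_mul]
  have idem := aeval_eq_of_dvd (u * X ^ m * X * (u * X ^ m * X)) (u * X ^ m * X)
    ⟨-u * v * X, by linear_combination (u * X ^ (m + 1)) * huv⟩
  have fixed := aeval_eq_of_dvd (X ^ m * (u * X ^ m * X)) (X ^ m)
    ⟨-v, by linear_combination X ^ m * huv⟩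
  refine ⟨u * X ^ m, m, ?_, ?_⟩
  · simpa only [IsIdempotentElem, map_mul, aeval_X] using idem
  · simpa only [map_mul, map_pow, aeval_X] using fixed

theorem isNilpotent_of_forall_trace_pow_succ_eq_zero {F V : Type*} [Field F] [CharZero F]
    [AddCommGroup V] [Module F V] [FiniteDimensional F V] {f : Module.End F V}
    (hf : ∀ n : ℕ, LinearMap.trace F V (f ^ (n + 1)) = 0) : IsNilpotent f := by
  obtain ⟨p, n, idem, hn⟩ :=
    exists_isIdempotentElem_aeval_mul (Algebra.IsIntegral.isIntegral (R := F) f)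
  have trace_eq_zero : LinearMap.trace F V (aeval f p * f) = 0 := by
    rw [aeval_eq_sum_range, Finset.sum_mul, map_sum]
    refine Finset.sum_eq_zero fun i _ => ?_
    rw [smul_mul_assoc, ← pow_succ, map_smul, hf, smul_zero]
  have aeval_mul_eq_zero := (LinearMap.IsIdempotentElem.trace_eq_zero_iff idem).1 trace_eq_zero
  exact ⟨n, by rw [← hn, aeval_mul_eq_zero, mul_zero]⟩

end TracePowers

section NilpotentSubmodule

variable {F R : Type*} [Ring R]

theorem isNilpotent_ideal_of_forall_isNilpotent [IsArtinianRing R] {I : Ideal R}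
    (hI : ∀ x ∈ I, IsNilpotent x) : IsNilpotent I := by
  have le_jacobson : I ≤ Ideal.jacobson ⊥ := fun x hx => Ideal.mem_jacobson_iff.2 fun y => by
    obtain ⟨u, hu⟩ := (hI _ (I.mul_mem_left y hx)).isUnit_add_one
    refine ⟨↑u⁻¹, ?_⟩
    rw [mul_assoc, ← mul_add_one, ← hu, Units.inv_mul, sub_self]
    exact zero_mem _
  obtain ⟨n, hn⟩ := IsArtinianRing.isNilpotent_jacobson_bot (R := R)
  exact ⟨n, le_bot_iff.1 ((Ideal.pow_right_mono le_jacobson n).trans_eq hn)⟩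

theorem isNilpotent_submodule_of_forall_isNilpotent [Field F] [Algebra F R]
    {X : Subalgebra F R} [FiniteDimensional F X] {T : Submodule F R} (hTX : T ≤ X.toSubmodule)
    (hXT : ∀ x ∈ X, ∀ y ∈ T, x * y ∈ T) (hT : ∀ y ∈ T, IsNilpotent y) : IsNilpotent T := by
  have : IsArtinianRing X := IsArtinianRing.of_finite F X
  let I : Ideal X :=
    { T.comap X.val.toLinearMap with smul_mem' := fun x y hy => hXT x x.2 y hy }
  obtain ⟨n, hn⟩ : IsNilpotent I := isNilpotent_ideal_of_forall_isNilpotent fun x hx =>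
    (IsNilpotent.map_iff (f := X.val) Subtype.val_injective).1 (hT x hx)
  have map_I : (I.restrictScalars F).map X.val.toLinearMap = T :=
    (Submodule.map_comap_eq _ _).trans (inf_eq_right.2 fun y hy => ⟨⟨y, hTX hy⟩, rfl⟩)
  refine ⟨n + 1, ?_⟩
  rw [← map_I, ← Submodule.map_pow, ← Submodule.restrictScalars_pow n.succ_ne_zero,
    Submodule.pow_succ, hn, zero_mul]
  exact Submodule.map_bot _

variable [CommRing F] [Algebra F R] {G : Set R}

theorem lie_mem_adjoin {h z : R} (hG : ∀ g ∈ G, ⁅h, g⁆ ∈ G) (hz : z ∈ Algebra.adjoin F G) :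
    ⁅h, z⁆ ∈ Algebra.adjoin F G := by
  induction hz using Algebra.adjoin_induction with
  | mem g hg => exact Algebra.subset_adjoin (hG g hg)
  | algebraMap r => rw [Ring.lie_def, Algebra.commutes r h, sub_self]; exact zero_mem _
  | add a b _ _ iha ihb =>
    have lie_add_eq : ⁅h, a + b⁆ = ⁅h, a⁆ + ⁅h, b⁆ := by simp only [Ring.lie_def]; noncomm_ring
    exact lie_add_eq ▸ add_mem iha ihb
  | mul a b ha hb iha ihb =>
    have lie_mul_eq : ⁅h, a * b⁆ = ⁅h, a⁆ * b + a * ⁅h, b⁆ := by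
      simp only [Ring.lie_def]; noncomm_ring
    exact lie_mul_eq ▸ add_mem (mul_mem iha hb) (mul_mem ha ihb)

theorem adjoin_mul_mul_adjoin_le {Y : Submodule F R} (hY : ∀ g ∈ G, ∀ y ∈ Y, ⁅g, y⁆ ∈ Y) :
    (Algebra.adjoin F G).toSubmodule * (Y * (Algebra.adjoin F G).toSubmodule) ≤
      Y * (Algebra.adjoin F G).toSubmodule := by
  refine Submodule.mul_le.2 fun z hz w hw => ?_
  replace hz : z ∈ Algebra.adjoin F G := hz
  induction hz using Algebra.adjoin_induction generalizing w with
  | mem g hg =>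
    induction hw using Submodule.mul_induction_on' with
    | mem_mul_mem y hy x hx =>
      have swap : g * (y * x) = y * (g * x) + ⁅g, y⁆ * x := by
        rw [Ring.lie_def]; noncomm_ring
      exact swap ▸ add_mem
        (Submodule.mul_mem_mul hy (Subalgebra.mul_mem _ (Algebra.subset_adjoin hg) hx))
        (Submodule.mul_mem_mul (hY g hg y hy) hx)
    | add w _ w' _ ihw ihw' => rw [mul_add]; exact add_mem ihw ihw'
  | algebraMap r => rw [← Algebra.smul_def]; exact Submodule.smul_mem _ r hw
  | add a b _ _ iha ihb => rw [add_mul]; exact add_mem (iha w hw) (ihb w hw)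
  | mul a b _ _ iha ihb => rw [mul_assoc]; exact iha _ (ihb w hw)

theorem isNilpotent_mul_adjoin {Y : Submodule F R} (hY : ∀ g ∈ G, ∀ y ∈ Y, ⁅g, y⁆ ∈ Y)
    (hnil : IsNilpotent Y) : IsNilpotent (Y * (Algebra.adjoin F G).toSubmodule) := by
  obtain ⟨n, hn⟩ := hnil
  have move_left := adjoin_mul_mul_adjoin_le hY
  have one_le : 1 ≤ (Algebra.adjoin F G).toSubmodule := Submodule.one_le.2 (Subalgebra.one_mem _)
  generalize (Algebra.adjoin F G).toSubmodule = X at move_left one_le ⊢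
  have pow_le : ∀ k, (Y * X) ^ k ≤ Y ^ k * X := fun k => by
    induction k with
    | zero => simpa only [pow_zero, one_mul] using one_le
    | succ k ih =>
      calc (Y * X) ^ (k + 1) ≤ Y ^ k * X * (Y * X) := by rw [pow_succ]; gcongr
        _ = Y ^ k * (X * (Y * X)) := by rw [mul_assoc]
        _ ≤ Y ^ k * (Y * X) := by gcongr
        _ = Y ^ (k + 1) * X := by rw [pow_succ, mul_assoc]
  exact ⟨n, le_bot_iff.1 ((pow_le n).trans_eq (by rw [hn, zero_mul]; rfl))⟩

end NilpotentSubmodule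

section TraceRadical

variable {R M : Type*} [CommRing R] [AddCommGroup M] [Module R M]

/-- The radical of the trace form `(y, z) ↦ tr (y * z)` on an associative algebra `X` of
endomorphisms of `M`. -/
def traceRadical (X : Subalgebra R (Module.End R M)) : Submodule R (Module.End R M) where
  carrier := {y | y ∈ X ∧ ∀ z ∈ X, LinearMap.trace R M (y * z) = 0}
  add_mem' := fun ⟨ha, ha'⟩ ⟨hb, hb'⟩ =>
    ⟨add_mem ha hb, fun z hz => by rw [add_mul, map_add, ha' z hz, hb' z hz, add_zero]⟩
  zero_mem' := ⟨zero_mem X, fun z _ => by rw [zero_mul, map_zero]⟩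
  smul_mem' := fun c _ ⟨ha, ha'⟩ =>
    ⟨X.smul_mem ha c, fun z hz => by rw [smul_mul_assoc, map_smul, ha' z hz, smul_zero]⟩

variable {X : Subalgebra R (Module.End R M)} {x y : Module.End R M}

theorem traceRadical_le : traceRadical X ≤ X.toSubmodule := fun _ hy => hy.1

theorem mul_mem_traceRadical_of_mem_left (hy : y ∈ traceRadical X) (hx : x ∈ X) :
    y * x ∈ traceRadical X :=
  ⟨mul_mem hy.1 hx, fun z hz => mul_assoc y x z ▸ hy.2 _ (mul_mem hx hz)⟩

theorem mul_mem_traceRadical_of_mem_right (hx : x ∈ X) (hy : y ∈ traceRadical X) :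
    x * y ∈ traceRadical X :=
  ⟨mul_mem hx hy.1, fun z hz => by
    rw [mul_assoc, LinearMap.trace_mul_comm, mul_assoc]; exact hy.2 _ (mul_mem hz hx)⟩

theorem lie_mem_traceRadical {h : Module.End R M} (hX : ∀ x ∈ X, ⁅h, x⁆ ∈ X)
    (hy : y ∈ traceRadical X) : ⁅h, y⁆ ∈ traceRadical X := by
  refine ⟨hX y hy.1, fun z hz => ?_⟩
  rw [Ring.lie_def, ← neg_sub, ← Ring.lie_def, neg_mul, map_neg, LinearMap.trace_lie_mul_eq,
    hy.2 _ (hX z hz), neg_zero]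

theorem le_traceRadical_adjoin_of_isNilpotent [IsReduced R] {G : Set (Module.End R M)}
    {Y : Submodule R (Module.End R M)} (hYG : Y ≤ (Algebra.adjoin R G).toSubmodule)
    (hGY : ∀ g ∈ G, ∀ y ∈ Y, ⁅g, y⁆ ∈ Y) (hY : IsNilpotent Y) :
    Y ≤ traceRadical (Algebra.adjoin R G) := by
  obtain ⟨n, hn⟩ := isNilpotent_mul_adjoin hGY hY
  refine fun y hy => ⟨hYG hy, fun z hz => ?_⟩
  have mem_mul := Submodule.mul_mem_mul hy ((Algebra.adjoin R G).mem_toSubmodule.2 hz)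
  have isNilpotent_mul : IsNilpotent (y * z) :=
    ⟨n, (Submodule.mem_bot R).1 (hn.le (Submodule.pow_mem_pow _ mem_mul n))⟩
  exact (LinearMap.isNilpotent_trace_of_isNilpotent isNilpotent_mul).eq_zero

variable {F V : Type*} [Field F] [CharZero F] [AddCommGroup V] [Module F V]
  [FiniteDimensional F V]

theorem isNilpotent_traceRadical (X : Subalgebra F (Module.End F V)) :
    IsNilpotent (traceRadical X) := by
  refine isNilpotent_submodule_of_forall_isNilpotent traceRadical_le
    (fun x hx y hy => mul_mem_traceRadical_of_mem_right hx hy) fun y hy => ?_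
  refine isNilpotent_of_forall_trace_pow_succ_eq_zero fun n => ?_
  rw [pow_succ']
  exact hy.2 _ (pow_mem hy.1 n)

theorem traceRadical_adjoin_mono {G H : Set (Module.End F V)} (hGH : G ⊆ H)
    (hHG : ∀ h ∈ H, ∀ g ∈ G, ⁅h, g⁆ ∈ G) :
    traceRadical (Algebra.adjoin F G) ≤ traceRadical (Algebra.adjoin F H) :=
  le_traceRadical_adjoin_of_isNilpotent
    (traceRadical_le.trans (Algebra.adjoin_mono hGH))
    (fun h hh _ hy => lie_mem_traceRadical (fun _ hx => lie_mem_adjoin (hHG h hh) hx) hy)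
    (isNilpotent_traceRadical _)

end TraceRadical

section LeibnizAlgebra

variable {F A : Type*} [Field F] [AddCommGroup A] [Module F A] {mul : A →ₗ[F] A →ₗ[F] A}
  {B C D I J M N S W : Submodule F A}

/-- The left Leibniz identity: every left multiplication `mul x` is a derivation of `mul`. -/
def IsLeftLeibniz (mul : A →ₗ[F] A →ₗ[F] A) : Prop :=
  ∀ x y z : A, mul x (mul y z) = mul (mul x y) z + mul y (mul x z)

theorem IsLeftLeibniz.mul_mul (hmul : IsLeftLeibniz mul) (x y z : A) :
    mul (mul x y) z = mul x (mul y z) - mul y (mul x z) :=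
  eq_sub_of_add_eq (hmul x y z).symm

theorem mul_mem_mulSub {b c : A} (hb : b ∈ B) (hc : c ∈ C) : mul b c ∈ mulSub mul B C :=
  Submodule.subset_span ⟨b, hb, c, hc, rfl⟩

theorem mulSub_le : mulSub mul B C ≤ D ↔ ∀ b ∈ B, ∀ c ∈ C, mul b c ∈ D := by
  refine ⟨fun h b hb c hc => h (mul_mem_mulSub hb hc), fun h => Submodule.span_le.2 ?_⟩
  rintro _ ⟨b, hb, c, hc, rfl⟩
  exact h b hb c hc

theorem mul_mem_fSub {b c : A} (hb : b ∈ B) (hc : c ∈ C) :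
    mul b c ∈ fSub mul B C ∧ mul c b ∈ fSub mul B C :=
  ⟨Submodule.mem_sup_left (mul_mem_mulSub hb hc), Submodule.mem_sup_right (mul_mem_mulSub hc hb)⟩

theorem fSub_le : fSub mul B C ≤ D ↔ ∀ b ∈ B, ∀ c ∈ C, mul b c ∈ D ∧ mul c b ∈ D :=
  ⟨fun h _ hb _ hc => ⟨h (mul_mem_fSub hb hc).1, h (mul_mem_fSub hb hc).2⟩, fun h =>
    sup_le (mulSub_le.2 fun b hb c hc => (h b hb c hc).1)
      (mulSub_le.2 fun c hc b hb => (h b hb c hc).2)⟩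

theorem fSub_mono (hBC : B ≤ C) (hIJ : I ≤ J) : fSub mul B I ≤ fSub mul C J :=
  fSub_le.2 fun _ hb _ hc => mul_mem_fSub (hBC hb) (hIJ hc)

theorem fIter_mono_left (hBC : B ≤ C) (n : ℕ) : fIter mul B D n ≤ fIter mul C D n := by
  induction n with
  | zero => exact fSub_mono hBC le_rfl
  | succ n ih => exact fSub_mono hBC ih

theorem fIter_fSub (B C : Submodule F A) (n : ℕ) :
    fIter mul B (fSub mul B C) n = fIter mul B C (n + 1) := by
  induction n with
  | zero => rfl
  | succ n ih => exact congrArg (fSub mul B) ih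

theorem lcs_le_self (hS : IsSubalg mul S) (n : ℕ) : lcs mul S n ≤ S := by
  induction n with
  | zero => exact le_rfl
  | succ n ih => exact mulSub_le.2 fun b hb c hc => hS b hb c (ih hc)

theorem lcs_antitone (hS : IsSubalg mul S) : Antitone (lcs mul S) := by
  refine antitone_nat_of_succ_le fun n => ?_
  induction n with
  | zero => exact lcs_le_self hS 1
  | succ n ih => exact mulSub_le.2 fun b hb c hc => mul_mem_mulSub hb (ih hc)

theorem mul_mem_lcs (hmul : IsLeftLeibniz mul) {i j : ℕ} {x y : A} (hx : x ∈ lcs mul S i)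
    (hy : y ∈ lcs mul S j) : mul x y ∈ lcs mul S (i + j + 1) := by
  induction i generalizing j x y with
  | zero => rw [zero_add]; exact mul_mem_mulSub hx hy
  | succ i ih =>
    suffices h : lcs mul S (i + 1) ≤ (lcs mul S (i + 1 + j + 1)).comap (mul.flip y) from h hx
    refine mulSub_le.2 fun b hb c hc => ?_
    rw [Submodule.mem_comap, LinearMap.flip_apply, hmul.mul_mul, Nat.add_right_comm i 1 j]
    exact sub_mem (mul_mem_mulSub hb (ih hc hy)) (ih hc (j := j + 1) (mul_mem_mulSub hb hy))

theorem mul_mem_fIter_of_mem_lcs (hmul : IsLeftLeibniz mul) {n : ℕ} {x e : A}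
    (hx : x ∈ lcs mul S n) (he : e ∈ C) :
    mul x e ∈ fIter mul S C n ∧ mul e x ∈ fIter mul S C n := by
  induction n generalizing C x e with
  | zero => exact mul_mem_fSub hx he
  | succ n ih =>
    suffices h : lcs mul S (n + 1) ≤ (fIter mul S C (n + 1)).comap (mul.flip e) ⊓
        (fIter mul S C (n + 1)).comap (mul e) from h hx
    refine mulSub_le.2 fun b hb c hc => ⟨?_, ?_⟩
    · change mul (mul b c) e ∈ fIter mul S C (n + 1)
      rw [hmul.mul_mul]
      exact sub_mem (mul_mem_fSub hb (ih hc he).1).1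
        (fIter_fSub S C n ▸ (ih hc (mul_mem_fSub hb he).1).1)
    · change mul e (mul b c) ∈ fIter mul S C (n + 1)
      rw [hmul e b c]
      exact add_mem (fIter_fSub S C n ▸ (ih hc (mul_mem_fSub hb he).2).2)
        (mul_mem_fSub hb (ih hc he).2).1

theorem fIter_add_le_lcs (hmul : IsLeftLeibniz mul) {t : ℕ} (ht : fIter mul S C t ≤ S) (n : ℕ) :
    fIter mul S C (t + n) ≤ lcs mul S n := by
  induction n with
  | zero => exact ht
  | succ n ih =>
    exact fSub_le.2 fun s hs x hx =>
      ⟨mul_mem_mulSub hs (ih hx), mul_mem_lcs hmul (ih hx) (j := 0) hs⟩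

theorem IsIdealIn.isSubalg (hI : IsIdealIn mul I J) : IsSubalg mul I :=
  fun x hx y hy => (hI.2 x (hI.1 hx) y hy).1

theorem isIdealIn_omegaSub (hmul : IsLeftLeibniz mul) {t : ℕ} (ht : fIter mul S ⊤ t ≤ S) :
    IsIdealIn mul (omegaSub mul S) ⊤ := by
  refine ⟨le_top, fun a ha w hw => ?_⟩
  have mem_lcs (n : ℕ) : mul w a ∈ lcs mul S n ∧ mul a w ∈ lcs mul S n :=
    (mul_mem_fIter_of_mem_lcs hmul ((Submodule.mem_iInf _).1 hw (t + n)) ha).imp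
      (fun h => fIter_add_le_lcs hmul ht n h) fun h => fIter_add_le_lcs hmul ht n h
  exact ⟨(Submodule.mem_iInf _).2 fun n => (mem_lcs n).2,
    (Submodule.mem_iInf _).2 fun n => (mem_lcs n).1⟩

theorem exists_lcs_eq_omegaSub [IsArtinian F A] (hS : IsSubalg mul S) :
    ∃ n, lcs mul S n = omegaSub mul S := by
  obtain ⟨n, hn⟩ : ∃ n, ∀ i, n ≤ i → lcs mul S n = lcs mul S i := IsArtinian.monotone_stabilizes
    (⟨fun n => OrderDual.toDual (lcs mul S n), lcs_antitone hS⟩ : ℕ →o (Submodule F A)ᵒᵈ)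
  refine ⟨n, le_antisymm (le_iInf fun i => ?_) (iInf_le _ n)⟩
  obtain hin | hni := le_total i n
  · exact lcs_antitone hS hin
  · exact (hn i hni).le

section Subinvariant

theorem IsSubalg.isSubinvariantIn_self (hS : IsSubalg mul S) : IsSubinvariantIn mul S S :=
  ⟨0, fun _ => S, rfl, rfl, fun _ _ => hS, fun i hi => absurd hi i.not_lt_zero⟩

theorem IsIdealIn.trans_isSubinvariantIn (hI : IsIdealIn mul I J)
    (hJ : IsSubinvariantIn mul J S) : IsSubinvariantIn mul I S := by
  obtain ⟨t, c, rfl, ht, hsub, hideal⟩ := hJ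
  refine ⟨t + 1, fun n => Nat.casesOn n I c, rfl, ht, ?_, ?_⟩
  · rintro (_ | i) hi
    · exact hI.isSubalg
    · exact hsub i (Nat.le_of_succ_le_succ hi)
  · rintro (_ | i) hi
    · exact hI
    · exact hideal i (Nat.lt_of_succ_lt_succ hi)

@[elab_as_elim]
theorem IsSubinvariantIn.induction {p : Submodule F A → Prop} (hB : IsSubinvariantIn mul B S)
    (self : IsSubalg mul S → p S)
    (ideal : ∀ I J, IsIdealIn mul I J → IsSubinvariantIn mul J S → p J → p I) : p B := by
  obtain ⟨t, c, rfl, ht, hsub, hideal⟩ := hB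
  induction t generalizing c with
  | zero => exact ht ▸ self (ht ▸ hsub 0 le_rfl)
  | succ t ih =>
    have hsub' : ∀ i ≤ t, IsSubalg mul (c (i + 1)) := fun i hi => hsub _ (Nat.succ_le_succ hi)
    have hideal' : ∀ i < t, IsIdealIn mul (c (i + 1)) (c (i + 2)) := fun i hi =>
      hideal _ (Nat.succ_lt_succ hi)
    exact ideal (c 0) (c 1) (hideal 0 t.succ_pos) ⟨t, fun i => c (i + 1), rfl, ht, hsub', hideal'⟩
      (ih (fun i => c (i + 1)) ht hsub' hideal')

theorem IsSubinvariantIn.trans (hB : IsSubinvariantIn mul B C) (hC : IsSubinvariantIn mul C D) :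
    IsSubinvariantIn mul B D :=
  hB.induction (fun _ => hC) fun _ _ hI _ hJ => hI.trans_isSubinvariantIn hJ

theorem IsSubinvariantIn.isSubalg (hB : IsSubinvariantIn mul B S) : IsSubalg mul B :=
  hB.induction id fun _ _ hI _ _ => hI.isSubalg

theorem IsSubinvariantIn.exists_fIter_le (hB : IsSubinvariantIn mul B S) :
    ∃ t, fIter mul B S t ≤ B := by
  refine hB.induction (fun hS => ⟨0, ?_⟩) fun I J hI _ ⟨t, ht⟩ => ⟨t + 1, ?_⟩
  · exact fSub_le.2 fun x hx y hy => ⟨hS x hx y hy, hS y hy x hx⟩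
  · exact fSub_le.2 fun x hx y hy => (hI.2 y (ht (fIter_mono_left hI.1 t hy)) x hx).symm

theorem isIdealIn_sup_sup (hM : IsSubalg mul M) (hJI : J ≤ I)
    (hMI : fSub mul (M ⊔ I) I ≤ J) : IsIdealIn mul (M ⊔ J) (M ⊔ I) := by
  refine ⟨sup_le_sup_left hJI M, fun x hx y hy => ?_⟩
  obtain ⟨m, hm, i, hi, rfl⟩ := Submodule.mem_sup.1 hx
  obtain ⟨m', hm', j, hj, rfl⟩ := Submodule.mem_sup.1 hy
  have mul_i := fSub_le.1 hMI m' (Submodule.mem_sup_left hm') i hi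
  have mul_j := fSub_le.1 hMI (m + i) hx j (hJI hj)
  constructor
  · have expand : mul (m + i) (m' + j) = mul m m' + (mul i m' + mul (m + i) j) := by
      rw [map_add, map_add, LinearMap.add_apply, add_assoc]
    exact expand ▸ Submodule.add_mem_sup (hM m hm m' hm') (add_mem mul_i.2 mul_j.1)
  · have expand : mul (m' + j) (m + i) = mul m' m + (mul m' i + mul j (m + i)) := by
      rw [map_add mul, LinearMap.add_apply, map_add (mul m'), add_assoc]
    exact expand ▸ Submodule.add_mem_sup (hM m' hm' m hm) (add_mem mul_i.1 mul_j.2)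

theorem isSubinvariantIn_of_lcs_le (hmul : IsLeftLeibniz mul) (hN : IsSubalg mul N)
    (hM : IsSubalg mul M) (hMN : M ≤ N) {k : ℕ} (hk : lcs mul N k ≤ M) :
    IsSubinvariantIn mul M N := by
  suffices h : IsSubinvariantIn mul (M ⊔ lcs mul N k) N by rwa [sup_eq_left.2 hk] at h
  clear hk
  induction k with
  | zero => exact (sup_eq_right.2 hMN : M ⊔ lcs mul N 0 = N).symm ▸ hN.isSubinvariantIn_self
  | succ k ih =>
    refine (isIdealIn_sup_sup hM (lcs_antitone hN k.le_succ) ?_).trans_isSubinvariantIn ih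
    exact fSub_le.2 fun n hn x hx =>
      have hn : n ∈ N := sup_le hMN (lcs_le_self hN k) hn
      ⟨mul_mem_mulSub hn hx, mul_mem_lcs hmul hx (j := 0) hn⟩

end Subinvariant

section LeftAction

variable {V : Type*} [AddCommGroup V] [Module F V] {φ : A →ₗ[F] Module.End F V}

/-- The elements of `A` that act on `V` through `φ` by an element of the trace radical of the
associative algebra generated by the action. -/
def actionRadical (φ : A →ₗ[F] Module.End F V) : Submodule F A :=
  (traceRadical (Algebra.adjoin F (Set.range φ))).comap φ

theorem isIdealIn_actionRadical (hφ : ∀ x y, φ (mul x y) = ⁅φ x, φ y⁆) :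
    IsIdealIn mul (actionRadical φ) ⊤ := by
  refine ⟨le_top, fun a _ x (hx : φ x ∈ traceRadical _) => ?_⟩
  have ha : φ a ∈ Algebra.adjoin F (Set.range φ) := Algebra.subset_adjoin ⟨a, rfl⟩
  have mul_left_mem := mul_mem_traceRadical_of_mem_right ha hx
  have mul_right_mem := mul_mem_traceRadical_of_mem_left hx ha
  refine ⟨Submodule.mem_comap.2 ?_, Submodule.mem_comap.2 ?_⟩ <;> rw [hφ, Ring.lie_def]
  exacts [sub_mem mul_left_mem mul_right_mem, sub_mem mul_right_mem mul_left_mem]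

theorem IsSubinvariantIn.traceRadical_adjoin_image_le [CharZero F] [FiniteDimensional F V]
    (hφ : ∀ x y, φ (mul x y) = ⁅φ x, φ y⁆) (hB : IsSubinvariantIn mul B S) :
    traceRadical (Algebra.adjoin F (φ '' B)) ≤ traceRadical (Algebra.adjoin F (φ '' S)) := by
  refine hB.induction (fun _ => le_rfl) fun I J hI _ ih =>
    (traceRadical_adjoin_mono (Set.image_mono hI.1) ?_).trans ih
  rintro _ ⟨x, hx, rfl⟩ _ ⟨y, hy, rfl⟩
  exact ⟨mul x y, (hI.2 x hx y hy).1, hφ x y⟩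

theorem IsSubinvariantIn.le_actionRadical [CharZero F] [FiniteDimensional F V]
    (hφ : ∀ x y, φ (mul x y) = ⁅φ x, φ y⁆) (hS : IsSubinvariantIn mul S ⊤)
    (hnil : IsNilpotent (S.map φ)) : S ≤ actionRadical φ := by
  have map_le : S.map φ ≤ traceRadical (Algebra.adjoin F (φ '' S)) := by
    refine le_traceRadical_adjoin_of_isNilpotent (fun f hf => Algebra.subset_adjoin hf) ?_ hnil
    rintro _ ⟨x, hx, rfl⟩ _ ⟨y, hy, rfl⟩
    exact ⟨mul x y, hS.isSubalg x hx y hy, hφ x y⟩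
  have adjoin_le := hS.traceRadical_adjoin_image_le hφ
  rw [Submodule.top_coe, Set.image_univ] at adjoin_le
  exact Submodule.map_le_iff_le_comap.1 (map_le.trans adjoin_le)

/-- The left multiplication action of `A` on its quotient by a left-invariant subspace `W`. -/
def quotientLeftMul (mul : A →ₗ[F] A →ₗ[F] A) (W : Submodule F A)
    (hW : ∀ a, W ≤ W.comap (mul a)) : A →ₗ[F] Module.End F (A ⧸ W) :=
  W.mapQLinear W ∘ₗ mul.codRestrict (W.compatibleMaps W) hW

variable {hW : ∀ a, W ≤ W.comap (mul a)}

theorem quotientLeftMul_mkQ (a x : A) :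
    quotientLeftMul mul W hW a (W.mkQ x) = W.mkQ (mul a x) := rfl

theorem quotientLeftMul_mul (hmul : IsLeftLeibniz mul) (x y : A) :
    quotientLeftMul mul W hW (mul x y) =
      ⁅quotientLeftMul mul W hW x, quotientLeftMul mul W hW y⁆ := by
  refine Submodule.linearMap_qext W (LinearMap.ext fun z => ?_)
  simp only [LinearMap.comp_apply, Ring.lie_def, LinearMap.sub_apply, Module.End.mul_apply,
    quotientLeftMul_mkQ, hmul.mul_mul, map_sub]

theorem isNilpotent_map_quotientLeftMul {n : ℕ} (hn : fIter mul S ⊤ n ≤ W) :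
    IsNilpotent (S.map (quotientLeftMul mul W hW)) := by
  set Y := S.map (quotientLeftMul mul W hW)
  have smul_map_le (C : Submodule F A) : Y • C.map W.mkQ ≤ (fSub mul S C).map W.mkQ := by
    refine Submodule.smul_le.2 ?_
    rintro _ ⟨s, hs, rfl⟩ _ ⟨c, hc, rfl⟩
    exact ⟨mul s c, (mul_mem_fSub hs hc).1, rfl⟩
  have pow_smul_top_le (k : ℕ) :
      Y ^ (k + 1) • (⊤ : Submodule F (A ⧸ W)) ≤ (fIter mul S ⊤ k).map W.mkQ := by
    induction k with
    | zero =>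
      rw [zero_add, pow_one, ← W.range_mkQ, ← Submodule.map_top]
      exact smul_map_le ⊤
    | succ k ih =>
      rw [pow_succ', ← smul_eq_mul, Submodule.smul_assoc]
      exact (smul_mono_right Y ih).trans (smul_map_le _)
  refine ⟨n + 1, (Submodule.eq_bot_iff _).2 fun f hf => LinearMap.ext fun v => ?_⟩
  obtain ⟨x, hx, hxv⟩ := pow_smul_top_le n (Submodule.smul_mem_smul hf (Submodule.mem_top (x := v)))
  exact hxv.symm.trans ((Submodule.Quotient.mk_eq_zero W).2 (hn hx))

theorem exists_lcs_actionRadical_le [CharZero F] [FiniteDimensional F A] :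
    ∃ k, lcs mul (actionRadical (quotientLeftMul mul W hW)) k ≤ W := by
  set ρ := quotientLeftMul mul W hW
  set T := traceRadical (Algebra.adjoin F (Set.range ρ))
  have lcs_le (n : ℕ) : lcs mul (actionRadical ρ) n ≤
      (T ^ n • (⊤ : Submodule F (A ⧸ W))).comap W.mkQ := by
    induction n with
    | zero => rw [pow_zero, Submodule.one_smul]; exact le_top
    | succ n ih =>
      rw [pow_succ', ← smul_eq_mul, Submodule.smul_assoc]
      exact mulSub_le.2 fun x hx y hy => 
        (Submodule.smul_mem_smul hx (ih hy) : ρ x • W.mkQ y ∈ T • T ^ n • ⊤)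
  obtain ⟨k, hk⟩ := isNilpotent_traceRadical (Algebra.adjoin F (Set.range ρ))
  refine ⟨k, (lcs_le k).trans ?_⟩
  rw [hk, Submodule.zero_eq_bot, Submodule.bot_smul, Submodule.comap_bot, W.ker_mkQ]

end LeftAction

theorem IsSubinvariantIn.exists_isIdealIn_lcs_le [CharZero F] [FiniteDimensional F A]
    (hmul : IsLeftLeibniz mul) (hS : IsSubinvariantIn mul S ⊤) :
    ∃ N k, IsIdealIn mul N ⊤ ∧ S ≤ N ∧ lcs mul N k ≤ omegaSub mul S := by
  obtain ⟨t, ht⟩ := hS.exists_fIter_le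
  obtain ⟨n, hn⟩ := exists_lcs_eq_omegaSub hS.isSubalg
  have omega_stable (a : A) : omegaSub mul S ≤ (omegaSub mul S).comap (mul a) := fun w hw =>
    ((isIdealIn_omegaSub hmul ht).2 a trivial w hw).1
  have bracket := quotientLeftMul_mul (hW := omega_stable) hmul
  have isNilpotent_map := isNilpotent_map_quotientLeftMul (hW := omega_stable)
    ((fIter_add_le_lcs hmul ht n).trans hn.le)
  obtain ⟨k, hk⟩ := exists_lcs_actionRadical_le (hW := omega_stable)
  exact ⟨_, k, isIdealIn_actionRadical bracket, hS.le_actionRadical bracket isNilpotent_map, hk⟩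

section SubalgGen

variable {s : Set A}

theorem subset_subalgGen : s ⊆ subalgGen mul s := fun _ hx =>
  Submodule.mem_sInf.2 fun _ hS => hS.2 hx

theorem isSubalg_subalgGen : IsSubalg mul (subalgGen mul s) := fun x hx y hy =>
  Submodule.mem_sInf.2 fun S hS =>
    hS.1 x (Submodule.mem_sInf.1 hx S hS) y (Submodule.mem_sInf.1 hy S hS)

theorem subalgGen_le (hS : IsSubalg mul S) (hs : s ⊆ S) : subalgGen mul s ≤ S :=
  sInf_le ⟨hS, hs⟩

theorem isIdealIn_subalgGen (hmul : IsLeftLeibniz mul) (hB : IsSubalg mul B) (hsB : s ⊆ B)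
    (hs : ∀ x ∈ s, ∀ b ∈ B, mul b x ∈ subalgGen mul s ∧ mul x b ∈ subalgGen mul s) :
    IsIdealIn mul (subalgGen mul s) B := by
  set G := subalgGen mul s
  let P : Submodule F A := G ⊓ ⨅ b ∈ B, G.comap (mul b) ⊓ G.comap (mul.flip b)
  have mem_P {x : A} : x ∈ P ↔ x ∈ G ∧ ∀ b ∈ B, mul b x ∈ G ∧ mul x b ∈ G := by
    simp only [P, Submodule.mem_inf, Submodule.mem_iInf, Submodule.mem_comap, LinearMap.flip_apply]
  have hG : IsSubalg mul G := isSubalg_subalgGen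
  have isSubalg_P : IsSubalg mul P := fun x hx y hy => by
    rw [mem_P] at hx hy ⊢
    refine ⟨hG x hx.1 y hy.1, fun b hb => ⟨?_, ?_⟩⟩
    · rw [hmul b x y]
      exact add_mem (hG _ (hx.2 b hb).1 y hy.1) (hG x hx.1 _ (hy.2 b hb).1)
    · rw [hmul.mul_mul x y b]
      exact sub_mem (hG x hx.1 _ (hy.2 b hb).2) (hG y hy.1 _ (hx.2 b hb).2)
  have G_le_P : G ≤ P :=
    subalgGen_le isSubalg_P fun x hx => mem_P.2 ⟨subset_subalgGen hx, hs x hx⟩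
  exact ⟨subalgGen_le hB hsB, fun b hb x hx => (mem_P.1 (G_le_P hx)).2 b hb⟩

end SubalgGen

end LeibnizAlgebra

/-- over characteristic zero, the subalgebra generated by all
subinvariant subalgebras of `A` contained in a subalgebra `B` is an ideal of
`B`. -/
theorem stmt_19 {F A : Type*} [Field F] [CharZero F]
    [AddCommGroup A] [Module F A] [FiniteDimensional F A]
    (mul : A →ₗ[F] A →ₗ[F] A)
    (hleib : ∀ x y z : A, mul x (mul y z) = mul (mul x y) z + mul y (mul x z))
    (B : Submodule F A) (hB : IsSubalg mul B) :
    IsIdealIn mul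
      (subalgGen mul
        (⋃ S ∈ {S : Submodule F A | IsSubinvariantIn mul S ⊤ ∧ S ≤ B}, (S : Set A)))
      B := by
  refine isIdealIn_subalgGen hleib hB (Set.iUnion₂_subset fun S hS => hS.2) fun x hx b hb => ?_
  obtain ⟨S, ⟨hS, hSB⟩, hxS⟩ := Set.mem_iUnion₂.1 hx
  obtain ⟨N, k, hN, hSN, hNk⟩ := hS.exists_isIdealIn_lcs_le hleib
  have isSubalg_inf : IsSubalg mul (N ⊓ B) := fun x hx y hy =>
    ⟨hN.isSubalg x hx.1 y hy.1, hB x hx.2 y hy.2⟩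
  have lcs_le : lcs mul N k ≤ N ⊓ B :=
    (hNk.trans (iInf_le _ 0 : omegaSub mul S ≤ S)).trans (le_inf hSN hSB)
  have isSubinvariantIn_inf : IsSubinvariantIn mul (N ⊓ B) ⊤ :=
    (isSubinvariantIn_of_lcs_le hleib hN.isSubalg isSubalg_inf inf_le_left lcs_le).trans
      (hN.trans_isSubinvariantIn (IsSubalg.isSubinvariantIn_self fun _ _ _ _ => trivial))
  have mul_mem_inf : mul b x ∈ N ⊓ B ∧ mul x b ∈ N ⊓ B :=
    (hN.2 b trivial x (hSN hxS)).imp (⟨·, hB b hb x (hSB hxS)⟩) (⟨·, hB x (hSB hxS) b hb⟩)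
  exact mul_mem_inf.imp
    (fun h => subset_subalgGen (Set.mem_biUnion ⟨isSubinvariantIn_inf, inf_le_right⟩ h))
    (fun h => subset_subalgGen (Set.mem_biUnion ⟨isSubinvariantIn_inf, inf_le_right⟩ h))
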